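/- The Steiner triple system of order 31 on Z_31 obtained by developing the base blocks {0,5,11}, {0,4,12}, {0,3,13}, {0,2,9}, {0,1,15} modulo 31 is nonsequenceable; moreover, for every point x ∈ Z_31 there exists an almost parallel class of this system that does not contain x. -/

import Mathlib

/-- `B` is (the block set of) a partial Steiner triple system on the point set `X`:
every block has 3 points and every pair of distinct points lies in at most one block. -/
def isPSTS {X : Type*} [DecidableEq X] (B : Finset (Finset X)) : Prop :=
  (∀ b ∈ B, b.card = 3) ∧
  ∀ p q : X, p ≠ q → (B.filter (fun b => p ∈ b ∧ q ∈ b)).card ≤ 1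

/-- `B` is (the block set of) a Steiner triple system on the point set `X`:
every block has 3 points and every pair of distinct points lies in exactly one block. -/
def isSTS {X : Type*} [DecidableEq X] (B : Finset (Finset X)) : Prop :=
  (∀ b ∈ B, b.card = 3) ∧
  ∀ p q : X, p ≠ q → (B.filter (fun b => p ∈ b ∧ q ∈ b)).card = 1

/-- The finset `S` can be partitioned into blocks of `B`. -/
def blocksPartition {X : Type*} [DecidableEq X] (B : Finset (Finset X)) (S : Finset X) : Prop :=
  ∃ P : Finset (Finset X), P ⊆ B ∧
    (∀ b₁ ∈ P, ∀ b₂ ∈ P, b₁ ≠ b₂ → Disjoint b₁ b₂) ∧ P.biUnion id = S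

/-- `A` is an almost parallel class of `B`: a set of pairwise disjoint blocks
covering all points of `X` except exactly one. -/
def isAPC {X : Type*} [DecidableEq X] [Fintype X] (B A : Finset (Finset X)) : Prop :=
  A ⊆ B ∧ (∀ b₁ ∈ A, ∀ b₂ ∈ A, b₁ ≠ b₂ → Disjoint b₁ b₂) ∧
    ∃ y : X, A.biUnion id = Finset.univ.erase y

/-- `B` is sequenceable: there is a sequencing of the points (a bijection from
`Fin n` to `X`) such that no proper segment can be partitioned into blocks of `B`. -/
def sequenceable {X : Type*} [DecidableEq X] [Fintype X] (B : Finset (Finset X)) : Prop :=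
  ∃ f : Fin (Fintype.card X) ≃ X,
    ∀ i j : Fin (Fintype.card X), i ≤ j →
      ¬((i : ℕ) = 0 ∧ (j : ℕ) = Fintype.card X - 1) →
      ¬ blocksPartition B ((Finset.Icc i j).image f)

/-- The blocks obtained by developing the base blocks modulo 31. -/
def dev31 : Finset (Finset (ZMod 31)) :=
  Finset.univ.biUnion fun t : ZMod 31 =>
    ({{0,5,11}, {0,4,12}, {0,3,13}, {0,2,9}, {0,1,15}} : Finset (Finset (ZMod 31))).image (fun b => b.image (· + t))

/-!
If every point is missed by some almost parallel class, then so is the first point of any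
sequencing, and the segment formed by all the other points is partitioned into blocks. For a
translation-invariant system over a group it suffices to find an almost parallel class missing `0`,
since its translate by `x` misses `x`. Here one is given explicitly: ten triples covering the 30
nonzero points, hence disjoint by counting.
-/

open Finset

theorem pairwiseDisjoint_of_sum_card_le_card_biUnion {ι α : Type*} [DecidableEq α]
    {s : Finset ι} {t : ι → Finset α} (hcard : ∑ i ∈ s, #(t i) ≤ #(s.biUnion t)) :
    (s : Set ι).PairwiseDisjoint t := by
  classical
  intro i hi j hj hij
  let rest := (s.erase i).biUnion t
  have hunion : s.biUnion t = t i ∪ rest := by rw [← biUnion_insert, insert_erase hi]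
  have hsum : #(t i) + ∑ k ∈ s.erase i, #(t k) = ∑ k ∈ s, #(t k) :=
    add_sum_erase s (fun k => #(t k)) hi
  have hrest : #rest ≤ ∑ k ∈ s.erase i, #(t k) := card_biUnion_le
  have hdisj : Disjoint (t i) rest := by
    rw [← card_union_eq_card_add_card]
    exact (card_union_le _ _).antisymm (by rw [← hunion]; omega)
  exact hdisj.mono_right (subset_biUnion_of_mem t (mem_erase.2 ⟨hij.symm, hj⟩))

section PartitionIntoBlocks

variable {X Y : Type*} [DecidableEq X] [DecidableEq Y]

theorem blocksPartition_of_sum_card_le {B P : Finset (Finset X)} {S : Finset X} (hPB : P ⊆ B)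
    (hPS : P.biUnion id = S) (hcard : ∑ b ∈ P, #b ≤ #S) : blocksPartition B S :=
  have hdisj : (P : Set (Finset X)).PairwiseDisjoint id :=
    pairwiseDisjoint_of_sum_card_le_card_biUnion (hPS ▸ hcard)
  ⟨P, hPB, fun _ h₁ _ h₂ hne => hdisj h₁ h₂ hne, hPS⟩

theorem blocksPartition.image {B : Finset (Finset X)} {C : Finset (Finset Y)} {S : Finset X}
    {g : X → Y} (hg : g.Injective) (hBC : ∀ b ∈ B, b.image g ∈ C) (hS : blocksPartition B S) :
    blocksPartition C (S.image g) := by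
  obtain ⟨P, hPB, hdisj, rfl⟩ := hS
  refine ⟨P.image (·.image g), ?_, ?_, ?_⟩
  · exact image_subset_iff.2 fun b hb => hBC b (hPB hb)
  · simp only [forall_mem_image]
    intro b₁ hb₁ b₂ hb₂ hne
    exact (disjoint_image hg).2 (hdisj b₁ hb₁ b₂ hb₂ (ne_of_apply_ne _ hne))
  · simp only [image_biUnion, biUnion_image, id]

theorem exists_isAPC_notMem_iff_blocksPartition_erase [Fintype X] {B : Finset (Finset X)} {x : X} :
    (∃ A, isAPC B A ∧ x ∉ A.biUnion id) ↔ blocksPartition B (univ.erase x) := by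
  constructor
  · rintro ⟨A, ⟨hAB, hdisj, y, hA⟩, hx⟩
    obtain rfl : x = y := by simpa [hA] using hx
    exact ⟨A, hAB, hdisj, hA⟩
  · rintro ⟨A, hAB, hdisj, hA⟩
    exact ⟨A, ⟨hAB, hdisj, x, hA⟩, hA ▸ notMem_erase x univ⟩

theorem not_sequenceable_of_forall_exists_isAPC [Fintype X] [Nontrivial X]
    {B : Finset (Finset X)} (hB : ∀ x, ∃ A, isAPC B A ∧ x ∉ A.biUnion id) : ¬ sequenceable B := by
  rintro ⟨f, hf⟩
  have hcard : 1 < Fintype.card X := Fintype.one_lt_card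
  let first : Fin (Fintype.card X) := ⟨0, by omega⟩
  let second : Fin (Fintype.card X) := ⟨1, hcard⟩
  let last : Fin (Fintype.card X) := ⟨Fintype.card X - 1, by omega⟩
  have hIcc : Icc second last = univ.erase first := by
    ext k
    simp only [mem_Icc, mem_erase, mem_univ, and_true, Fin.le_def, ne_eq, Fin.ext_iff,
      first, second, last]
    omega
  have himage : (Icc second last).image f = univ.erase (f first) := by
    rw [hIcc, image_erase f.injective, image_univ_equiv]
  have hle : second ≤ last := Fin.mk_le_mk.2 (by omega)
  refine hf second last hle (fun h => one_ne_zero h.1) ?_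
  rw [himage]
  exact exists_isAPC_notMem_iff_blocksPartition_erase.1 (hB (f first))

theorem blocksPartition_erase_of_erase_zero {G : Type*} [AddGroup G] [Fintype G] [DecidableEq G]
    {B : Finset (Finset G)} (hB : ∀ t, ∀ b ∈ B, b.image (· + t) ∈ B)
    (hzero : blocksPartition B (univ.erase 0)) (x : G) : blocksPartition B (univ.erase x) := by
  have htranslate : (univ.erase (0 : G)).image (· + x) = univ.erase x := by
    rw [image_erase (add_left_injective x), image_univ_of_surjective (add_right_surjective x),
      zero_add]
  exact htranslate ▸ hzero.image (add_left_injective x) (hB x)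

end PartitionIntoBlocks

theorem image_add_right_mem_dev31 (t : ZMod 31) (b : Finset (ZMod 31)) (hb : b ∈ dev31) :
    b.image (· + t) ∈ dev31 := by
  simp only [dev31, mem_biUnion, mem_univ, true_and] at hb ⊢
  obtain ⟨s, hs⟩ := hb
  obtain ⟨c, hc, rfl⟩ := mem_image.1 hs
  refine ⟨s + t, mem_image.2 ⟨c, hc, ?_⟩⟩
  simp only [image_image, Function.comp_def, add_assoc]

theorem blocksPartition_dev31_erase_zero : blocksPartition dev31 (univ.erase 0) :=
  -- Each line consists of translates of one base block, written as `{t, t + a, t + b}`.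
  blocksPartition_of_sum_card_le
    (P := {{1, 6, 12}, {2, 7, 13}, {15, 20, 26}, {23, 28, 3}, {30, 4, 10},
      {14, 17, 27}, {16, 19, 29},
      {9, 11, 18},
      {21, 22, 5}, {24, 25, 8}})
    (by decide +kernel) (by decide +kernel) (by decide +kernel)

theorem exists_isAPC_dev31_notMem (x : ZMod 31) : ∃ A, isAPC dev31 A ∧ x ∉ A.biUnion id :=
  exists_isAPC_notMem_iff_blocksPartition_erase.2 <|
    blocksPartition_erase_of_erase_zero image_add_right_mem_dev31
      blocksPartition_dev31_erase_zero x

theorem stmt10 :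
    ¬ sequenceable dev31 ∧
    (∀ x : ZMod 31, ∃ A : Finset (Finset (ZMod 31)),
      isAPC dev31 A ∧ x ∉ A.biUnion id) := by
  have : Nontrivial (ZMod 31) := ZMod.nontrivial_iff.2 (by norm_num)
  exact ⟨not_sequenceable_of_forall_exists_isAPC exists_isAPC_dev31_notMem,
    exists_isAPC_dev31_notMem⟩
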